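/- Let B be a separable stable C*-algebra and A ∈ M(B) a self-adjoint Fredholm operator such that 1_{C(B)} ≾ 1_{≥0}(π(A)) and 1_{C(B)} ≾ 1_{C(B)} − 1_{≥0}(π(A)) (Murray–von Neumann subequivalence). If the K₁-index Ind₁(A) = ∂₁([1_{≥0}(π(A))]) = 0 in K₁(B), then 1_{≥0}(π(A)) lifts to a projection in M(B). -/

import Mathlib

open scoped MultiplierAlgebra

/-- The spectral projection `1_{≥0}(x)` of a self-adjoint element onto `[0, ∞)`,
obtained by applying the indicator function of `[0, ∞)` via the continuous
functional calculus. -/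
noncomputable def posSpectralProj {C : Type*} [CStarAlgebra C] (x : C) : C :=
  cfc (fun t : ℝ => if 0 ≤ t then (1 : ℝ) else 0) x

/-- `x ∈ 𝓜(ℂ, B)` belongs to (the canonical image of) the ideal `B` of its
multiplier algebra. -/
def inCanonicalIdeal {B : Type*} [NonUnitalCStarAlgebra B] (x : 𝓜(ℂ, B)) : Prop :=
  ∃ b : B, (b : 𝓜(ℂ, B)) = x

/-- Murray–von Neumann equivalence of projections. -/
def MvNEquiv {C : Type*} [Mul C] [Star C] (p q : C) : Prop :=
  ∃ v : C, star v * v = p ∧ v * star v = q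

/-- `B` is a stable C*-algebra, encoded via the standard characterization (for σ-unital,
in particular separable, `B`): the multiplier algebra `𝓜(ℂ, B)` contains a sequence of
isometries with pairwise orthogonal ranges whose range projections sum to `1` strictly. -/
def IsStable (B : Type*) [NonUnitalCStarAlgebra B] : Prop :=
  ∃ s : ℕ → 𝓜(ℂ, B),
    (∀ n, star (s n) * s n = 1) ∧
    (∀ m n, m ≠ n → star (s m) * s n = 0) ∧
    ∀ b : B, Filter.Tendsto
      (fun N : ℕ => (∑ n ∈ Finset.range N, s n * star (s n)) * (b : 𝓜(ℂ, B)))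
      Filter.atTop (nhds (b : 𝓜(ℂ, B)))

/-- The projection `p ⊕ 1ₙ` in the `(n+1) × (n+1)` matrices over `Q`. -/
noncomputable def matStab {Q : Type*} [Ring Q] (p : Q) (n : ℕ) :
    Matrix (Fin (n + 1)) (Fin (n + 1)) Q :=
  Matrix.diagonal (fun i => if i = 0 then p else 1)

/-- The K₀-class of the projection `p` vanishes: `p ⊕ 1ₙ` is Murray–von Neumann equivalent
to `0 ⊕ 1ₙ` in some matrix algebra.  This is the standard concrete description of
`[p]₀ = 0` in `K₀`. -/
def K0ClassZero {Q : Type*} [CStarAlgebra Q] (p : Q) : Prop :=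
  ∃ n : ℕ, MvNEquiv (matStab p n) (matStab (0 : Q) n)

/-!
Write `p` for the projection to be lifted and `s n` for the isometries witnessing stability.
Compressing the matrix equivalence `p ⊕ 1ₙ ∼ 0 ⊕ 1ₙ` into the corona by the isometries `π (s i)`,
and using that `p` dominates a copy of `1` and so absorbs further copies, gives `p ∼ π G` for the
projection `G = 1 - s 0 (s 0)*` of `M(B)`.

Since `(s n)* k → 0` for `k` in the ideal, an isometry below `1 - p`, composed with some `π (s n)`,
lifts to an isometry `T`. Then `p` is orthogonal to `π (T G T*)` and equivalent to it through a
partial isometry `x` with `x² = 0`. Such an `x` can be lifted to an `X` with `X² = 0`, and then the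
unitary quarter turn taking `x* x` to `x x*`, a product of elementary matrices in `x`, lifts to an
invertible element. Its isometric part in the polar decomposition carries `T G T*` to a lift of `p`.
-/

section StarRing

open scoped Matrix

variable {C : Type*} [Ring C] [StarRing C]

theorem mul_mul_star_self_eq_iff_of_isometry {v : C} (hv : star v * v = 1) (q : C) :
    q * (v * star v) = v * star v ↔ q * v = v := by
  refine ⟨fun h => ?_, fun h => by rw [← mul_assoc, h]⟩
  simpa only [mul_assoc, hv, mul_one] using congr($h * v)

theorem isStarProjection_conj_of_isometry {v p : C} (hv : star v * v = 1)
    (hp : IsStarProjection p) : IsStarProjection (v * p * star v) where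
  isIdempotentElem := by
    calc v * p * star v * (v * p * star v) = v * (p * (star v * v) * p) * star v := by
          simp only [mul_assoc]
      _ = v * p * star v := by rw [hv, mul_one, hp.isIdempotentElem.eq]
  isSelfAdjoint := hp.isSelfAdjoint.conjugate v

theorem isStarProjection_mul_star_self_of_isometry {v : C} (hv : star v * v = 1) :
    IsStarProjection (v * star v) := by
  simpa only [mul_one] using isStarProjection_conj_of_isometry hv (.one C)

theorem MvNEquiv.trans {S : Type*} [Semigroup S] [StarMul S] {p q r : S}
    (hp : IsIdempotentElem p) (hr : IsIdempotentElem r)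
    (hpq : MvNEquiv p q) (hqr : MvNEquiv q r) : MvNEquiv p r := by
  obtain ⟨v, hvp, hvq⟩ := hpq
  obtain ⟨w, hwq, hwr⟩ := hqr
  refine ⟨w * v, ?_, ?_⟩
  · calc star (w * v) * (w * v) = star v * (star w * w) * v := by simp only [star_mul, mul_assoc]
      _ = star v * v * (star v * v) := by rw [hwq, ← hvq]; simp only [mul_assoc]
      _ = p := by rw [hvp, hp.eq]
  · calc w * v * star (w * v) = w * (v * star v) * star w := by simp only [star_mul, mul_assoc]
      _ = w * star w * (w * star w) := by rw [hvq, ← hwq]; simp only [mul_assoc]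
      _ = r := by rw [hwr, hr.eq]

section Amplify

variable {A : Type*} [Ring A] [StarRing A]

/-- The element `φ a ⊕ 1`, that is `φ a + (1 - φ 1)`: it acts as `φ a` on the corner of `C` cut out
by the projection `φ 1`, and as `1` on the complementary corner. -/
def amplify (φ : A →⋆ₙ+* C) (a : A) : C := 1 + φ (a - 1)

theorem amplify_one (φ : A →⋆ₙ+* C) : amplify φ 1 = 1 := by simp [amplify]

theorem amplify_mul (φ : A →⋆ₙ+* C) (a b : A) :
    amplify φ a * amplify φ b = amplify φ (a * b) := by
  calc amplify φ a * amplify φ b = 1 + (φ (a - 1) + φ (b - 1) + φ ((a - 1) * (b - 1))) := by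
        rw [amplify, amplify, map_mul]; noncomm_ring
    _ = amplify φ (a * b) := by
        rw [← map_add, ← map_add, amplify]; congr 2; noncomm_ring

theorem star_amplify (φ : A →⋆ₙ+* C) (a : A) : star (amplify φ a) = amplify φ (star a) := by
  simp [amplify, ← map_star]

theorem MvNEquiv.map_amplify (φ : A →⋆ₙ+* C) {a b : A} (hab : MvNEquiv a b) :
    MvNEquiv (amplify φ a) (amplify φ b) := by
  obtain ⟨v, rfl, rfl⟩ := hab
  exact ⟨amplify φ v, by rw [star_amplify, amplify_mul], by rw [star_amplify, amplify_mul]⟩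

end Amplify

/-- The embedding `a ↦ t a t*` of `C` onto its corner cut out by the range of the isometry `t`. -/
def isometryConj {t : C} (ht : star t * t = 1) : C →⋆ₙ+* C where
  toFun a := t * a * star t
  map_zero' := by simp
  map_add' a b := by rw [mul_add, add_mul]
  map_star' a := by simp [mul_assoc]
  map_mul' a b := by
    calc t * (a * b) * star t = t * a * (star t * t) * b * star t := by
          rw [ht, mul_one]; simp only [mul_assoc]
      _ = t * a * star t * (t * b * star t) := by simp only [mul_assoc]

theorem amplify_isometryConj {t : C} (ht : star t * t = 1) (a : C) :
    amplify (isometryConj ht) a = 1 + t * (a - 1) * star t := rfl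

theorem star_mul_amplify_isometryConj {t : C} (ht : star t * t = 1) (a : C) :
    star t * amplify (isometryConj ht) a = a * star t := by
  calc star t * amplify (isometryConj ht) a = star t + star t * t * (a - 1) * star t := by
        rw [amplify_isometryConj]; noncomm_ring
    _ = a * star t := by rw [ht]; noncomm_ring

/-- With `e = p - v v*`, the isometry `t` moves `e` to `t e t*`, and `(v ⊕ 1) v*` moves `v v*` to
`v v* ⊕ 1`. -/
theorem mvnEquiv_amplify_isometryConj {p v t : C} (hp : IsStarProjection p)
    (hv : star v * v = 1) (hpv : p * v = v) (ht : star t * t = 1) :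
    MvNEquiv p (amplify (isometryConj ht) p) := by
  have he : IsStarProjection (p - v * star v) :=
    (isStarProjection_mul_star_self_of_isometry hv).sub_of_mul_eq_right hp
      (by rw [← mul_assoc, hpv])
  set e := p - v * star v with e_def
  have hev : e * v = 0 := by rw [e_def, sub_mul, hpv, mul_assoc, hv, mul_one, sub_self]
  have hve : star v * e = 0 := by simpa [he.isSelfAdjoint.star_eq] using congr(star $hev)
  have hta := star_mul_amplify_isometryConj ht v
  have haa : star (amplify (isometryConj ht) v) * amplify (isometryConj ht) v = 1 := by
    rw [star_amplify, amplify_mul, hv, amplify_one]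
  have haa' : amplify (isometryConj ht) v * star (amplify (isometryConj ht) v)
      = 1 + t * (v * star v - 1) * star t := by
    rw [star_amplify, amplify_mul, amplify_isometryConj]
  set a := amplify (isometryConj ht) v
  have hat : star a * t = t * star v := by simpa using congr(star $hta)
  refine ⟨t * e + a * star v, ?_, ?_⟩
  · calc star (t * e + a * star v) * (t * e + a * star v)
        = e * (star t * t) * e + e * (star t * a) * star v + v * (star a * t) * e
          + v * (star a * a) * star v := by
          simp only [star_add, star_mul, star_star, he.isSelfAdjoint.star_eq]; noncomm_ring
      _ = e * e + (e * v) * star t * star v + v * t * (star v * e) + v * star v := by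
          rw [ht, hta, hat, haa]; noncomm_ring
      _ = p := by rw [hev, hve, he.isIdempotentElem.eq, e_def]; simp
  · calc (t * e + a * star v) * star (t * e + a * star v)
        = t * (e * e) * star t + t * (e * v) * star a + a * (star v * e) * star t
          + a * (star v * v) * star a := by
          simp only [star_add, star_mul, star_star, he.isSelfAdjoint.star_eq]; noncomm_ring
      _ = t * e * star t + a * star a := by rw [hev, hve, hv, he.isIdempotentElem.eq]; simp
      _ = amplify (isometryConj ht) p := by
          rw [haa', e_def, amplify_isometryConj]; noncomm_ring

/-- A family of isometries with pairwise orthogonal ranges, i.e. a representation of the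
Toeplitz–Cuntz relations. -/
structure IsOrthogonalIsometries {ι : Type*} (t : ι → C) : Prop where
  star_mul_self : ∀ i, star (t i) * t i = 1
  star_mul_of_ne : ∀ i j, i ≠ j → star (t i) * t j = 0

namespace IsOrthogonalIsometries

variable {ι : Type*} {t : ι → C}

theorem map {D F : Type*} [Ring D] [StarRing D] [FunLike F C D] [RingHomClass F C D]
    [StarHomClass F C D] (ht : IsOrthogonalIsometries t) (φ : F) :
    IsOrthogonalIsometries (fun i => φ (t i)) where
  star_mul_self i := by rw [← map_star, ← map_mul, ht.star_mul_self, map_one]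
  star_mul_of_ne i j hij := by rw [← map_star, ← map_mul, ht.star_mul_of_ne i j hij, map_zero]

theorem comp {κ : Type*} (ht : IsOrthogonalIsometries t) {f : κ → ι} (hf : f.Injective) :
    IsOrthogonalIsometries (t ∘ f) where
  star_mul_self i := ht.star_mul_self (f i)
  star_mul_of_ne i j hij := ht.star_mul_of_ne (f i) (f j) (hf.ne hij)

theorem star_mul [DecidableEq ι] (ht : IsOrthogonalIsometries t) (i j : ι) :
    star (t i) * t j = if i = j then 1 else 0 := by
  split_ifs with hij
  · rw [hij, ht.star_mul_self]
  · exact ht.star_mul_of_ne i j hij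

variable [Fintype ι] [DecidableEq ι]

/-- The embedding `V ↦ ∑ i j, t i * V i j * (t j)*` of the matrix algebra onto the corner cut out
by the ranges of the isometries `t i`. -/
def matrixEmbedding (ht : IsOrthogonalIsometries t) : Matrix ι ι C →⋆ₙ+* C where
  toFun V := t ⬝ᵥ V *ᵥ star t
  map_zero' := by simp
  map_add' V W := by rw [Matrix.add_mulVec, dotProduct_add]
  map_star' V := by
    rw [← Matrix.star_dotProduct_star, Matrix.star_mulVec, star_star, Matrix.dotProduct_mulVec,
      Matrix.star_eq_conjTranspose]
  map_mul' V W := by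
    have hone : Matrix.vecMulVec (star t) t = 1 := by
      ext i j
      simp [Matrix.vecMulVec_apply, Matrix.one_apply, ht.star_mul]
    calc t ⬝ᵥ (V * W) *ᵥ star t = t ⬝ᵥ V *ᵥ Matrix.vecMulVec (star t) t *ᵥ W *ᵥ star t := by
          rw [hone, Matrix.one_mulVec, Matrix.mulVec_mulVec]
      _ = (t ⬝ᵥ V *ᵥ star t) * (t ⬝ᵥ W *ᵥ star t) := by
          rw [Matrix.vecMulVec_mulVec, Matrix.mulVec_smul, dotProduct_smul]; simp

theorem amplify_matrixEmbedding_matStab {n : ℕ} {t : Fin (n + 1) → C}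
    (ht : IsOrthogonalIsometries t) (p : C) :
    amplify ht.matrixEmbedding (matStab p n) = amplify (isometryConj (ht.star_mul_self 0)) p := by
  rw [amplify, matStab, ← Matrix.diagonal_one, Matrix.diagonal_sub, amplify_isometryConj]
  change 1 + t ⬝ᵥ _ = _
  simp [dotProduct, Matrix.mulVec_diagonal, Fin.sum_univ_succ, mul_assoc]

end IsOrthogonalIsometries

/-- The quarter turn `!![0, 1; -1, 0]` in the plane spanned by the orthogonal initial and final
projections of the partial isometry `x`, as a product of elementary matrices. The factors remain
invertible when `x` is replaced by any element of square zero. -/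
def quarterTurn (x : C) : C := (1 + x) * (1 - star x) * (1 + x)

theorem map_quarterTurn {D F : Type*} [Ring D] [StarRing D] [FunLike F C D] [RingHomClass F C D]
    [StarHomClass F C D] (φ : F) (x : C) : φ (quarterTurn x) = quarterTurn (φ x) := by
  simp [quarterTurn, map_star]

theorem quarterTurn_neg_mul {x : C} (hx : x * x = 0) : quarterTurn (-x) * quarterTurn x = 1 := by
  have hx_star : star x * star x = 0 := by rw [← star_mul, hx, star_zero]
  have hcancel {y : C} (hy : y * y = 0) : (1 + -y) * (1 + y) = 1 := by
    calc (1 + -y) * (1 + y) = 1 - y * y := by noncomm_ring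
      _ = 1 := by rw [hy, sub_zero]
  have hcancel_star : (1 - star (-x)) * (1 - star x) = 1 := by
    simpa [sub_eq_add_neg] using hcancel (y := -star x) (by rwa [neg_mul_neg])
  calc quarterTurn (-x) * quarterTurn x
      = (1 + -x) * ((1 - star (-x)) * ((1 + -x) * (1 + x)) * (1 - star x)) * (1 + x) := by
        simp only [quarterTurn, mul_assoc]
    _ = 1 := by rw [hcancel hx, mul_one, hcancel_star, mul_one, hcancel hx]

theorem isUnit_quarterTurn {x : C} (hx : x * x = 0) : IsUnit (quarterTurn x) :=
  isUnit_iff_exists.2 ⟨quarterTurn (-x),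
    by simpa using quarterTurn_neg_mul (x := -x) (by rwa [neg_mul_neg]), quarterTurn_neg_mul hx⟩

theorem quarterTurn_eq {x : C} (hx : x * x = 0) (hpi : x * star x * x = x) :
    quarterTurn x = x - star x + (1 - x * star x - star x * x) := by
  calc quarterTurn x
      = x - star x + (1 - x * star x - star x * x) + (x * x + x - x * star x * x) := by
        unfold quarterTurn; noncomm_ring
    _ = x - star x + (1 - x * star x - star x * x) := by rw [hx, hpi]; simp

theorem star_quarterTurn_mul_self {x : C} (hx : x * x = 0) (hpi : x * star x * x = x) :
    star (quarterTurn x) * quarterTurn x = 1 := by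
  suffices hstar : star (quarterTurn x) = quarterTurn (-x) by rw [hstar, quarterTurn_neg_mul hx]
  rw [quarterTurn_eq hx hpi, quarterTurn_eq (by simpa) (by simpa)]
  simp only [star_add, star_sub, star_mul, star_one, star_star, star_neg]
  noncomm_ring

theorem quarterTurn_mul_star_mul_self {x : C} (hx : x * x = 0) (hpi : x * star x * x = x) :
    quarterTurn x * (star x * x) = x := by
  have hx_star : star x * star x = 0 := by rw [← star_mul, hx, star_zero]
  rw [quarterTurn_eq hx hpi]
  calc (x - star x + (1 - x * star x - star x * x)) * (star x * x)
      = x * star x * x - star x * star x * x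
        + (star x * x - x * (star x * star x) * x - star x * (x * star x * x)) := by noncomm_ring
    _ = x := by rw [hpi, hx_star]; simp

end StarRing

section CStarAlgebra

open Filter Topology

variable {M Q : Type*} [CStarAlgebra M] [CStarAlgebra Q]

theorem mul_star_mul_self_of_isIdempotentElem {E : Type*} [NonUnitalNormedRing E] [StarRing E]
    [CStarRing E] {x : E} (hx : IsIdempotentElem (x * star x)) : x * star x * x = x := by
  rw [← sub_eq_zero, ← CStarRing.mul_star_self_eq_zero_iff]
  calc (x * star x * x - x) * star (x * star x * x - x)
      = x * star x * (x * star x) * (x * star x) - x * star x * (x * star x)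
        - x * star x * (x * star x) + x * star x := by
        simp only [star_sub, star_mul, star_star, sub_mul, mul_sub, mul_assoc]; abel
    _ = 0 := by rw [hx.eq, hx.eq]; simp

theorem norm_le_one_of_isometry {v : Q} (hv : star v * v = 1) : ‖v‖ ≤ 1 := by
  have hsq : ‖v‖ * ‖v‖ ≤ 1 := by
    rw [← CStarRing.norm_star_mul_self, hv]
    exact IsStarProjection.norm_le 1 (.one Q)
  nlinarith [norm_nonneg v]

theorem tendsto_star_mul_zero_of_tendsto_sum_mul {s : ℕ → M} (hs : ∀ n, star (s n) * s n = 1)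
    {b : M} (hb : Tendsto (fun N => (∑ n ∈ Finset.range N, s n * star (s n)) * b)
      atTop (𝓝 b)) :
    Tendsto (fun n => star (s n) * b) atTop (𝓝 0) := by
  have hterm : Tendsto (fun n => s n * star (s n) * b) atTop (𝓝 0) := by
    simpa [Finset.sum_range_succ, add_mul] using
      (hb.comp (tendsto_add_atTop_nat 1)).sub hb
  refine squeeze_zero_norm (fun n => ?_) (tendsto_zero_iff_norm_tendsto_zero.1 hterm)
  calc ‖star (s n) * b‖ = ‖star (s n) * (s n * star (s n) * b)‖ := by
        rw [← mul_assoc, ← mul_assoc, hs, one_mul]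
    _ ≤ ‖star (s n)‖ * ‖s n * star (s n) * b‖ := norm_mul_le _ _
    _ ≤ ‖s n * star (s n) * b‖ := by
        rw [norm_star]
        exact mul_le_of_le_one_left (norm_nonneg _) (norm_le_one_of_isometry (hs n))

theorem IsStable.exists_isOrthogonalIsometries_tendsto {B : Type*} [NonUnitalCStarAlgebra B]
    (hB : IsStable B) : ∃ s : ℕ → 𝓜(ℂ, B), IsOrthogonalIsometries s ∧
      ∀ k, inCanonicalIdeal k → Tendsto (fun n => star (s n) * k) atTop (𝓝 0) := by
  obtain ⟨s, hiso, horth, hsum⟩ := hB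
  refine ⟨s, ⟨hiso, horth⟩, ?_⟩
  rintro _ ⟨b, rfl⟩
  exact tendsto_star_mul_zero_of_tendsto_sum_mul hiso (hsum b)

theorem exists_isometry_map_eq_of_isUnit (π : M →⋆ₐ[ℂ] Q) {Y : M} (hY : IsUnit (star Y * Y))
    (hπY : star (π Y) * π Y = 1) : ∃ W : M, star W * W = 1 ∧ π W = π Y := by
  let _ := CStarAlgebra.spectralOrder M
  let _ := CStarAlgebra.spectralOrder Q
  have _ := CStarAlgebra.spectralOrderedRing M
  have _ := CStarAlgebra.spectralOrderedRing Q
  have hsqrt_mul : CFC.sqrt (star Y * Y) * CFC.sqrt (star Y * Y) = star Y * Y :=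
    CFC.sqrt_mul_sqrt_self _ (star_mul_self_nonneg Y)
  have hsqrt_star : IsSelfAdjoint (CFC.sqrt (star Y * Y)) := (CFC.sqrt_nonneg _).isSelfAdjoint
  have hmap_sqrt : π (CFC.sqrt (star Y * Y)) = 1 := by
    rw [← CFC.sqrt_unique (a := 1) (by rw [← map_mul, hsqrt_mul, map_mul, map_star, hπY])
      (map_nonneg π (CFC.sqrt_nonneg _)), CFC.sqrt_one]
  obtain ⟨r, hr⟩ := (CFC.isUnit_sqrt_iff _ (star_mul_self_nonneg Y)).2 hY
  rw [← hr] at hsqrt_mul hsqrt_star hmap_sqrt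
  have hrinv : star (↑r⁻¹ : M) = ↑r⁻¹ := by
    have hr_star : star r = r := Units.ext hsqrt_star.star_eq
    rw [← Units.coe_star, star_inv, hr_star]
  refine ⟨Y * ↑r⁻¹, ?_, ?_⟩
  · calc star (Y * ↑r⁻¹) * (Y * ↑r⁻¹) = ↑r⁻¹ * (star Y * Y) * ↑r⁻¹ := by
          rw [star_mul, hrinv]; simp only [mul_assoc]
      _ = 1 := by rw [← hsqrt_mul]; simp
  · have hmap_inv : π (↑r⁻¹ : M) = 1 := by
      rw [← one_mul (π ↑r⁻¹), ← hmap_sqrt, ← map_mul, r.mul_inv, map_one, hmap_sqrt]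
    rw [map_mul, hmap_inv, mul_one]

theorem exists_isometry_map_eq_mul_of_tendsto {π : M →⋆ₐ[ℂ] Q} (hπ : Function.Surjective π)
    {s : ℕ → M} (hs : ∀ n, star (s n) * s n = 1)
    (hker : ∀ k, π k = 0 → Tendsto (fun n => star (s n) * k) atTop (𝓝 0))
    {v : Q} (hv : star v * v = 1) : ∃ (n : ℕ) (T : M), star T * T = 1 ∧ π T = v * π (s n) := by
  obtain ⟨V, rfl⟩ := hπ v
  have hdefect : π (1 - star V * V) = 0 := by simp [map_star, hv]
  obtain ⟨n, hn⟩ := ((Metric.tendsto_nhds.1 (hker _ hdefect)) 1 one_pos).exists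
  rw [dist_zero_right] at hn
  have hcompress : star (V * s n) * (V * s n) = 1 - star (s n) * (1 - star V * V) * s n := by
    calc star (V * s n) * (V * s n)
        = star (s n) * s n - star (s n) * (1 - star V * V) * s n := by
          rw [star_mul]; noncomm_ring
      _ = 1 - star (s n) * (1 - star V * V) * s n := by rw [hs]
  have hunit : IsUnit (star (V * s n) * (V * s n)) := by
    rw [hcompress]
    refine isUnit_one_sub_of_norm_lt_one ((norm_mul_le _ _).trans_lt ?_)
    exact (mul_le_of_le_one_right (norm_nonneg _) (norm_le_one_of_isometry (hs n))).trans_lt hn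
  have hmap : star (π (V * s n)) * π (V * s n) = 1 := by
    rw [← map_star, ← map_mul, hcompress]
    simp [hdefect]
  obtain ⟨T, hT, hπT⟩ := exists_isometry_map_eq_of_isUnit π hunit hmap
  exact ⟨n, T, hT, hπT.trans (map_mul π V (s n))⟩

theorem exists_isStarProjection_map_eq_mul_star_self (π : M →⋆ₐ[ℂ] Q) {X P : M} (hX : X * X = 0)
    (hpi : π X * star (π X) * π X = π X) (hP : IsStarProjection P)
    (hPX : π P = star (π X) * π X) :
    ∃ R : M, IsStarProjection R ∧ π R = π X * star (π X) := by
  have hx : π X * π X = 0 := by rw [← map_mul, hX, map_zero]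
  have hturn := isUnit_quarterTurn hX
  obtain ⟨W, hW, hπW⟩ := exists_isometry_map_eq_of_isUnit π (hturn.star.mul hturn)
    (by rw [map_quarterTurn, star_quarterTurn_mul_self hx hpi])
  refine ⟨W * P * star W, isStarProjection_conj_of_isometry hW hP, ?_⟩
  have hmove : π W * π P = π X := by
    rw [hπW, map_quarterTurn, hPX, quarterTurn_mul_star_mul_self hx hpi]
  calc π (W * P * star W) = π W * (π P * π P) * star (π W) := by
        rw [← map_mul π P P, hP.isIdempotentElem.eq, map_mul, map_mul, map_star]
    _ = (π W * π P) * star (π W * π P) := by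
        rw [star_mul, ← map_star π P, hP.isSelfAdjoint.star_eq]; simp only [mul_assoc]
    _ = π X * star (π X) := by rw [hmove]

theorem MvNEquiv.exists_isStarProjection_map_eq {π : M →⋆ₐ[ℂ] Q} (hπ : Function.Surjective π)
    {p : Q} {G T : M} (hpG : MvNEquiv p (π G)) (hp : IsIdempotentElem p)
    (hG : IsStarProjection G) (hT : star T * T = 1) (hpT : p * π T = 0) :
    ∃ R : M, IsStarProjection R ∧ π R = p := by
  obtain ⟨y, hyp, hyG⟩ := hpG
  obtain ⟨Y, rfl⟩ := hπ y
  have hπT : star (π T) * π T = 1 := by rw [← map_star, ← map_mul, hT, map_one]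
  have hyT : π Y * π T = 0 := by
    rw [← CStarRing.star_mul_self_eq_zero_iff]
    calc star (π Y * π T) * (π Y * π T) = star (π T) * (star (π Y) * π Y * π T) := by
          simp only [star_mul, mul_assoc]
      _ = 0 := by rw [hyp, hpT, mul_zero]
  set X := (1 - T * star T) * star Y * star T with hX_def
  have hX : X * X = 0 := by
    have hT_compl : star T * (1 - T * star T) = 0 := by
      rw [mul_sub, ← mul_assoc, hT, mul_one, one_mul, sub_self]
    calc X * X = (1 - T * star T) * star Y * (star T * (1 - T * star T)) * star Y * star T := by
          simp only [hX_def, mul_assoc]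
      _ = 0 := by rw [hT_compl]; simp
  have hπX : π X = star (π Y) * star (π T) := by
    calc π X = star (π Y) * star (π T) - π T * star (π Y * π T) * star (π T) := by
          simp only [hX_def, map_mul, map_sub, map_one, map_star, star_mul]; noncomm_ring
      _ = star (π Y) * star (π T) := by rw [hyT]; simp
  have hXp : π X * star (π X) = p := by
    calc π X * star (π X) = star (π Y) * (star (π T) * π T) * π Y := by
          rw [hπX]; simp only [star_mul, star_star, mul_assoc]
      _ = p := by rw [hπT, mul_one, hyp]
  have hXG : π (T * G * star T) = star (π X) * π X := by
    rw [map_mul, map_mul, map_star, ← hyG, hπX]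
    simp only [star_mul, star_star, mul_assoc]
  rw [← hXp] at hp ⊢
  exact exists_isStarProjection_map_eq_mul_star_self π hX
    (mul_star_mul_self_of_isIdempotentElem hp) (isStarProjection_conj_of_isometry hT hG) hXG

theorem K0ClassZero.mvnEquiv_one_sub {p v : Q} (hp0 : K0ClassZero p) (hp : IsStarProjection p)
    (hv : star v * v = 1) (hpv : p * v = v) {t : ℕ → Q} (ht : IsOrthogonalIsometries t) :
    MvNEquiv p (1 - t 0 * star (t 0)) := by
  obtain ⟨n, hn⟩ := hp0
  have htn : IsOrthogonalIsometries (t ∘ (Fin.val : Fin (n + 1) → ℕ)) := ht.comp Fin.val_injective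
  have hamplify := hn.map_amplify htn.matrixEmbedding
  rw [htn.amplify_matrixEmbedding_matStab, htn.amplify_matrixEmbedding_matStab] at hamplify
  have hzero : amplify (isometryConj (htn.star_mul_self 0)) 0 = 1 - t 0 * star (t 0) := by
    simp [amplify_isometryConj, sub_eq_add_neg]
  rw [hzero] at hamplify
  exact (mvnEquiv_amplify_isometryConj hp hv hpv _).trans hp.isIdempotentElem
    (isStarProjection_mul_star_self_of_isometry (ht.star_mul_self 0)).one_sub.isIdempotentElem
    hamplify

theorem isStarProjection_posSpectralProj (x : Q) : IsStarProjection (posSpectralProj x) where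
  isIdempotentElem := by
    unfold posSpectralProj
    by_cases hcont : ContinuousOn (fun t : ℝ => if 0 ≤ t then (1 : ℝ) else 0) (spectrum ℝ x)
    · rw [IsIdempotentElem, ← cfc_mul _ _ x hcont hcont]
      simp only [mul_ite, mul_one, mul_zero, ← ite_and, and_self]
    · rw [cfc_apply_of_not_continuousOn _ hcont]
      exact .zero
  isSelfAdjoint := cfc_predicate _ x

theorem stmt9_general {π : M →⋆ₐ[ℂ] Q} (hπ : Function.Surjective π) {s : ℕ → M}
    (hs : IsOrthogonalIsometries s)
    (hker : ∀ k, π k = 0 → Tendsto (fun n => star (s n) * k) atTop (𝓝 0))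
    {p : Q} (hp : IsStarProjection p)
    (hsub₁ : ∃ v : Q, star v * v = 1 ∧ p * (v * star v) = v * star v)
    (hsub₂ : ∃ v : Q, star v * v = 1 ∧ (1 - p) * (v * star v) = v * star v)
    (hind : K0ClassZero p) : ∃ R : M, IsStarProjection R ∧ π R = p := by
  obtain ⟨v, hv, hpv⟩ := hsub₁
  obtain ⟨w, hw, hpw⟩ := hsub₂
  rw [mul_mul_star_self_eq_iff_of_isometry hv] at hpv
  rw [mul_mul_star_self_eq_iff_of_isometry hw, sub_mul, one_mul, sub_eq_self] at hpw
  obtain ⟨n, T, hT, hπT⟩ := exists_isometry_map_eq_mul_of_tendsto hπ hs.star_mul_self hker hw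
  have hpT : p * π T = 0 := by rw [hπT, ← mul_assoc, hpw, zero_mul]
  have hpG : MvNEquiv p (π (1 - s 0 * star (s 0))) := by
    simpa [map_star] using hind.mvnEquiv_one_sub hp hv hpv (hs.map π)
  have hG : IsStarProjection (1 - s 0 * star (s 0)) :=
    (isStarProjection_mul_star_self_of_isometry (hs.star_mul_self 0)).one_sub
  exact hpG.exists_isStarProjection_map_eq hπ hp.isIdempotentElem hG hT hpT

end CStarAlgebra

/-- Let `B` be a separable stable C*-algebra, `π : M(B) → C(B)` the corona
quotient map (encoded as a surjective `*`-homomorphism onto a unital C*-algebra `Q` with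
kernel the canonical ideal `B`), and `A ∈ M(B)` a self-adjoint Fredholm operator with
`1 ≾ 1_{≥0}(π(A))` and `1 ≾ 1 − 1_{≥0}(π(A))` (Murray–von Neumann subequivalence, encoded
by isometries with range projection dominated by the given projection).  If the K₁-index
`Ind₁(A) = ∂₁([1_{≥0}(π(A))]) = 0` in `K₁(B)` — equivalently, since `∂₁` is injective for
stable `B`, if the K₀-class `[1_{≥0}(π(A))]₀` vanishes — then `1_{≥0}(π(A))` lifts to a
projection in `M(B)`. -/
theorem stmt9 {B Q : Type*} [NonUnitalCStarAlgebra B] [TopologicalSpace.SeparableSpace B]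
    [CStarAlgebra Q] (hstable : IsStable B)
    (π : 𝓜(ℂ, B) →⋆ₐ[ℂ] Q) (hπ : Function.Surjective π)
    (hker : ∀ m : 𝓜(ℂ, B), π m = 0 ↔ inCanonicalIdeal m)
    (A : 𝓜(ℂ, B)) (hA : IsSelfAdjoint A) (hFred : IsUnit (π A))
    (hsub₁ : ∃ v : Q, star v * v = 1 ∧
      posSpectralProj (π A) * (v * star v) = v * star v)
    (hsub₂ : ∃ v : Q, star v * v = 1 ∧
      (1 - posSpectralProj (π A)) * (v * star v) = v * star v)
    (hind : K0ClassZero (posSpectralProj (π A))) :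
    ∃ R : 𝓜(ℂ, B), IsSelfAdjoint R ∧ IsIdempotentElem R ∧
      π R = posSpectralProj (π A) := by
  obtain ⟨s, hs, hs_tendsto⟩ := hstable.exists_isOrthogonalIsometries_tendsto
  obtain ⟨R, hR, hπR⟩ := stmt9_general hπ hs (fun k hk => hs_tendsto k ((hker k).1 hk))
    (isStarProjection_posSpectralProj (π A)) hsub₁ hsub₂ hind
  exact ⟨R, hR.isSelfAdjoint, hR.isIdempotentElem, hπR⟩
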